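/- arXiv:2512.23524 — 3 statements merged into one kernel-verified Lean document; each statement's English description precedes it below -/
import Mathlib

section
/- Cross-term bound for the SAM perturbed stochastic gradient (step in the SharpDRO proof): For every t, E⟨g'_t, ∇_θ L(θ_t, ω_t)⟩ ≤ (ρ l + 3/2) E‖∇_θ L(θ_t, ω_t)‖² + ρ² l² σ² / (2M). -/
open MeasureTheory

/-- Partial gradient of `L` with respect to the first variable `θ`. -/
noncomputable def gradTheta {d n : ℕ}
    (L : EuclideanSpace ℝ (Fin d) → EuclideanSpace ℝ (Fin n) → ℝ)
    (θ : EuclideanSpace ℝ (Fin d)) (ω : EuclideanSpace ℝ (Fin n)) :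
    EuclideanSpace ℝ (Fin d) :=
  gradient (fun θ' => L θ' ω) θ

/-- Partial gradient of `L` with respect to the second variable `ω`. -/
noncomputable def gradOmega {d n : ℕ}
    (L : EuclideanSpace ℝ (Fin d) → EuclideanSpace ℝ (Fin n) → ℝ)
    (θ : EuclideanSpace ℝ (Fin d)) (ω : EuclideanSpace ℝ (Fin n)) :
    EuclideanSpace ℝ (Fin n) :=
  gradient (fun ω' => L θ ω') ω

open ProbabilityTheory

theorem sharpDRO_cross_term_bound {d n : ℕ} {Ω : Type} [mΩ : MeasurableSpace Ω]
    (P : Measure Ω) [IsProbabilityMeasure P]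
    (L : EuclideanSpace ℝ (Fin d) → EuclideanSpace ℝ (Fin n) → ℝ)
    (l μpl σ ρ : ℝ) (M : ℕ)
    (hl : 0 < l) (hμpl : 0 < μpl) (hσ : 0 < σ) (hρ : 0 < ρ) (hM : 1 ≤ M)
    (hdiff : Differentiable ℝ (Function.uncurry L))
    (hLip : ∀ θ₁ ω₁ θ₂ ω₂,
      ‖gradTheta L θ₁ ω₁ - gradTheta L θ₂ ω₂‖ ≤ l * Real.sqrt (‖θ₁ - θ₂‖ ^ 2 + ‖ω₁ - ω₂‖ ^ 2) ∧
      ‖gradOmega L θ₁ ω₁ - gradOmega L θ₂ ω₂‖ ≤ l * Real.sqrt (‖θ₁ - θ₂‖ ^ 2 + ‖ω₁ - ω₂‖ ^ 2))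
    (Lstar : EuclideanSpace ℝ (Fin d) → ℝ)
    (hLstar : ∀ θ', IsGreatest (Set.range (L θ')) (Lstar θ'))
    (hPL : ∀ θ' ω', 2 * μpl * (Lstar θ' - L θ' ω') ≤ ‖gradOmega L θ' ω'‖ ^ 2)
    (F : ℕ → MeasurableSpace Ω) (hF : ∀ t, F t ≤ mΩ)
    (θ : ℕ → Ω → EuclideanSpace ℝ (Fin d)) (ω : ℕ → Ω → EuclideanSpace ℝ (Fin n))
    (g g' : ℕ → Ω → EuclideanSpace ℝ (Fin d))
    (hθmeas : ∀ t, Measurable[F t] (θ t)) (hωmeas : ∀ t, Measurable[F t] (ω t))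
    (hgmeas : ∀ t, Measurable (g t)) (hg'meas : ∀ t, Measurable (g' t))
    (hg_mean : ∀ t, P[g t|F t] =ᵐ[P] fun x => gradTheta L (θ t x) (ω t x))
    (hg_var : ∀ t, ∀ᵐ x ∂P,
      (P[(fun y => ‖g t y - gradTheta L (θ t y) (ω t y)‖ ^ 2)|F t]) x ≤ σ ^ 2 / (M : ℝ))
    (hg'_mean : ∀ t, P[g' t|F t ⊔ MeasurableSpace.comap (g t) inferInstance] =ᵐ[P]
      fun x => gradTheta L (θ t x + ρ • g t x) (ω t x))
    (hg'_var : ∀ t, ∀ᵐ x ∂P,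
      (P[(fun y => ‖g' t y - gradTheta L (θ t y + ρ • g t y) (ω t y)‖ ^ 2)|
        F t ⊔ MeasurableSpace.comap (g t) inferInstance]) x ≤ σ ^ 2 / (M : ℝ))
    (hint_g2 : ∀ t, Integrable (fun x => ‖g t x‖ ^ 2) P)
    (hint_g'2 : ∀ t, Integrable (fun x => ‖g' t x‖ ^ 2) P)
    (hint_gradθ2 : ∀ t, Integrable (fun x => ‖gradTheta L (θ t x) (ω t x)‖ ^ 2) P)
    (hint_inner : ∀ t,
      Integrable (fun x => (inner ℝ (g' t x) (gradTheta L (θ t x) (ω t x)) : ℝ)) P)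
    :
    ∀ t, ∫ x, (inner ℝ (g' t x) (gradTheta L (θ t x) (ω t x)) : ℝ) ∂P
      ≤ (ρ * l + 3 / 2) * ∫ x, ‖gradTheta L (θ t x) (ω t x)‖ ^ 2 ∂P
        + ρ ^ 2 * l ^ 2 * σ ^ 2 / (2 * M) := by
  intro t
  have hcont : Continuous (fun p : EuclideanSpace ℝ (Fin d) × EuclideanSpace ℝ (Fin n) =>
      gradTheta L p.1 p.2) := by
    rw [continuous_iff_continuousAt]
    intro p
    rw [ContinuousAt, tendsto_iff_norm_sub_tendsto_zero]
    refine squeeze_zero (fun _ => norm_nonneg _) (fun q => (hLip q.1 q.2 p.1 p.2).1) ?_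
    have hc : Continuous (fun q : EuclideanSpace ℝ (Fin d) × EuclideanSpace ℝ (Fin n) =>
      l * Real.sqrt (‖q.1 - p.1‖ ^ 2 + ‖q.2 - p.2‖ ^ 2)) := by fun_prop
    simpa using hc.tendsto p
  have hLip1 : ∀ a b w, ‖gradTheta L a w - gradTheta L b w‖ ≤ l * ‖a - b‖ := by
    intro a b w
    simpa using (hLip a w b w).1
  set G : Ω → EuclideanSpace ℝ (Fin d) := fun x => gradTheta L (θ t x) (ω t x) with hG
  have hmle : F t ⊔ MeasurableSpace.comap (g t) inferInstance ≤ mΩ := sup_le (hF t) (hgmeas t).comap_le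
  have hGF : Measurable[F t] G := hcont.measurable.comp ((hθmeas t).prodMk (hωmeas t))
  have hGm : StronglyMeasurable[F t ⊔ MeasurableSpace.comap (g t) inferInstance] G := hGF.stronglyMeasurable.mono le_sup_left
  have hGmeas : Measurable G := hGF.mono (hF t) le_rfl
  have hG2 : MemLp G 2 P :=
    (memLp_two_iff_integrable_sq_norm hGmeas.aestronglyMeasurable).2 (hint_gradθ2 t)
  have hg2 : MemLp (g t) 2 P :=
    (memLp_two_iff_integrable_sq_norm (hgmeas t).aestronglyMeasurable).2 (hint_g2 t)
  have hg'2 : MemLp (g' t) 2 P :=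
    (memLp_two_iff_integrable_sq_norm (hg'meas t).aestronglyMeasurable).2 (hint_g'2 t)
  have hN : Integrable (fun x => ‖g t x - G x‖ ^ 2) P :=
    (memLp_two_iff_integrable_sq_norm
      ((hgmeas t).sub hGmeas).aestronglyMeasurable).1 (hg2.sub hG2)
  have hNle : ∫ x, ‖g t x - G x‖ ^ 2 ∂P ≤ σ ^ 2 / (M : ℝ) := by
    rw [← integral_condExp (hF t)]
    calc _ ≤ ∫ x, σ ^ 2 / (M : ℝ) ∂P :=
          integral_mono_ae integrable_condExp (integrable_const _) (hg_var t)
      _ = _ := by simp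
  have hpull := condExp_bilin_of_stronglyMeasurable_right (m := F t ⊔ MeasurableSpace.comap (g t) inferInstance) (innerSL ℝ) hGm
    (hint_inner t) (hg'2.integrable (by norm_num))
  have htower : ∫ x, (inner ℝ (g' t x) (G x) : ℝ) ∂P
      = ∫ x, (P[(fun x => (inner ℝ (g' t x) (G x) : ℝ))|F t ⊔ MeasurableSpace.comap (g t) inferInstance]) x ∂P := (integral_condExp hmle).symm
  rw [htower]
  have hbound : ∀ᵐ x ∂P, (P[(fun x => (inner ℝ (g' t x) (G x) : ℝ))|F t ⊔ MeasurableSpace.comap (g t) inferInstance]) x ≤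
      (ρ * l + 3 / 2) * ‖G x‖ ^ 2 + ρ ^ 2 * l ^ 2 / 2 * ‖g t x - G x‖ ^ 2 := by
    filter_upwards [hpull, hg'_mean t] with x hx hx'
    refine (le_of_eq hx).trans ?_
    simp only [hx']
    have e1 := hLip1 (θ t x + ρ • g t x) (θ t x + ρ • G x) (ω t x)
    have e2 := hLip1 (θ t x + ρ • G x) (θ t x) (ω t x)
    rw [add_sub_add_left_eq_sub, ← smul_sub, norm_smul, Real.norm_of_nonneg hρ.le] at e1
    rw [add_sub_cancel_left, norm_smul, Real.norm_of_nonneg hρ.le] at e2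
    change ‖_ - G x‖ ≤ _ at e2
    set h := gradTheta L (θ t x + ρ • g t x) (ω t x)
    set h0 := gradTheta L (θ t x + ρ • G x) (ω t x)
    have e3 : (inner ℝ h (G x) : ℝ) =
        inner ℝ (h - h0) (G x) + inner ℝ (h0 - G x) (G x) + ‖G x‖ ^ 2 := by
      rw [← real_inner_self_eq_norm_sq, ← inner_add_left, ← inner_add_left]
      congr 1
      abel
    have e4 := (real_inner_le_norm (h - h0) (G x)).trans
      (mul_le_mul_of_nonneg_right e1 (norm_nonneg _))
    have e5 := (real_inner_le_norm (h0 - G x) (G x)).trans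
      (mul_le_mul_of_nonneg_right e2 (norm_nonneg _))
    change (inner ℝ h (G x) : ℝ) ≤ _
    rw [e3]
    nlinarith [sq_nonneg (ρ * l * ‖g t x - G x‖ - ‖G x‖)]
  calc _ ≤ ∫ x, ((ρ * l + 3 / 2) * ‖G x‖ ^ 2 + ρ ^ 2 * l ^ 2 / 2 * ‖g t x - G x‖ ^ 2) ∂P :=
        integral_mono_ae integrable_condExp
          (((hint_gradθ2 t).const_mul _).add (hN.const_mul _)) hbound
    _ = (ρ * l + 3 / 2) * ∫ x, ‖G x‖ ^ 2 ∂P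
        + ρ ^ 2 * l ^ 2 / 2 * ∫ x, ‖g t x - G x‖ ^ 2 ∂P := by
        rw [integral_add ((hint_gradθ2 t).const_mul _) (hN.const_mul _),
          integral_const_mul, integral_const_mul]
    _ ≤ (ρ * l + 3 / 2) * ∫ x, ‖G x‖ ^ 2 ∂P + ρ ^ 2 * l ^ 2 / 2 * (σ ^ 2 / (M : ℝ)) := by
        gcongr
    _ = _ := by
        congr 1
        rw [div_mul_div_comm]
end

section
/- Second-moment bound for the SAM perturbed stochastic gradient (Lemma in the SharpDRO proof): For every t, E‖g'_t‖² ≤ (4ρ²l² + 2ρl + 2) E‖∇_θ L(θ_t, ω_t)‖² + (5ρ²l² + 2) σ²/M. -/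
open MeasureTheory

open ProbabilityTheory

theorem sharpDRO_second_moment_bound {d n : ℕ} {Ω : Type} [mΩ : MeasurableSpace Ω]
    (P : Measure Ω) [IsProbabilityMeasure P]
    (L : EuclideanSpace ℝ (Fin d) → EuclideanSpace ℝ (Fin n) → ℝ)
    (l μpl σ ρ : ℝ) (M : ℕ)
    (hl : 0 < l) (hμpl : 0 < μpl) (hσ : 0 < σ) (hρ : 0 < ρ) (hM : 1 ≤ M)
    (hdiff : Differentiable ℝ (Function.uncurry L))
    (hLip : ∀ θ₁ ω₁ θ₂ ω₂,
      ‖gradTheta L θ₁ ω₁ - gradTheta L θ₂ ω₂‖ ≤ l * Real.sqrt (‖θ₁ - θ₂‖ ^ 2 + ‖ω₁ - ω₂‖ ^ 2) ∧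
      ‖gradOmega L θ₁ ω₁ - gradOmega L θ₂ ω₂‖ ≤ l * Real.sqrt (‖θ₁ - θ₂‖ ^ 2 + ‖ω₁ - ω₂‖ ^ 2))
    (Lstar : EuclideanSpace ℝ (Fin d) → ℝ)
    (hLstar : ∀ θ', IsGreatest (Set.range (L θ')) (Lstar θ'))
    (hPL : ∀ θ' ω', 2 * μpl * (Lstar θ' - L θ' ω') ≤ ‖gradOmega L θ' ω'‖ ^ 2)
    (F : ℕ → MeasurableSpace Ω) (hF : ∀ t, F t ≤ mΩ)
    (θ : ℕ → Ω → EuclideanSpace ℝ (Fin d)) (ω : ℕ → Ω → EuclideanSpace ℝ (Fin n))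
    (g g' : ℕ → Ω → EuclideanSpace ℝ (Fin d))
    (hθmeas : ∀ t, Measurable[F t] (θ t)) (hωmeas : ∀ t, Measurable[F t] (ω t))
    (hgmeas : ∀ t, Measurable (g t)) (hg'meas : ∀ t, Measurable (g' t))
    (hg_mean : ∀ t, P[g t|F t] =ᵐ[P] fun x => gradTheta L (θ t x) (ω t x))
    (hg_var : ∀ t, ∀ᵐ x ∂P,
      (P[(fun y => ‖g t y - gradTheta L (θ t y) (ω t y)‖ ^ 2)|F t]) x ≤ σ ^ 2 / (M : ℝ))
    (hg'_mean : ∀ t, P[g' t|F t ⊔ MeasurableSpace.comap (g t) inferInstance] =ᵐ[P]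
      fun x => gradTheta L (θ t x + ρ • g t x) (ω t x))
    (hg'_var : ∀ t, ∀ᵐ x ∂P,
      (P[(fun y => ‖g' t y - gradTheta L (θ t y + ρ • g t y) (ω t y)‖ ^ 2)|
        F t ⊔ MeasurableSpace.comap (g t) inferInstance]) x ≤ σ ^ 2 / (M : ℝ))
    (hint_g2 : ∀ t, Integrable (fun x => ‖g t x‖ ^ 2) P)
    (hint_g'2 : ∀ t, Integrable (fun x => ‖g' t x‖ ^ 2) P)
    (hint_gradθ2 : ∀ t, Integrable (fun x => ‖gradTheta L (θ t x) (ω t x)‖ ^ 2) P)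
    (hint_inner : ∀ t,
      Integrable (fun x => (inner ℝ (g' t x) (gradTheta L (θ t x) (ω t x)) : ℝ)) P)
    :
    ∀ t, ∫ x, ‖g' t x‖ ^ 2 ∂P
      ≤ (4 * ρ ^ 2 * l ^ 2 + 2 * ρ * l + 2) * ∫ x, ‖gradTheta L (θ t x) (ω t x)‖ ^ 2 ∂P
        + (5 * ρ ^ 2 * l ^ 2 + 2) * σ ^ 2 / M := by
  intro t
  have hcont : Continuous (fun p : EuclideanSpace ℝ (Fin d) × EuclideanSpace ℝ (Fin n) =>
      gradTheta L p.1 p.2) := by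
    rw [continuous_iff_continuousAt]
    intro q
    rw [ContinuousAt, tendsto_iff_norm_sub_tendsto_zero]
    have h0 : Filter.Tendsto (fun p : EuclideanSpace ℝ (Fin d) × EuclideanSpace ℝ (Fin n) =>
        l * Real.sqrt (‖p.1 - q.1‖ ^ 2 + ‖p.2 - q.2‖ ^ 2)) (nhds q) (nhds 0) := by
      have hc : Continuous (fun p : EuclideanSpace ℝ (Fin d) × EuclideanSpace ℝ (Fin n) =>
        l * Real.sqrt (‖p.1 - q.1‖ ^ 2 + ‖p.2 - q.2‖ ^ 2)) := by fun_prop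
      have := hc.tendsto q
      simpa using this
    exact squeeze_zero (fun _ => norm_nonneg _) (fun p => (hLip p.1 p.2 q.1 q.2).1) h0
  set m : MeasurableSpace Ω := F t ⊔ MeasurableSpace.comap (g t) inferInstance with hm
  have hmle : m ≤ mΩ := sup_le (hF t) (hgmeas t).comap_le
  set G : Ω → EuclideanSpace ℝ (Fin d) := fun x => gradTheta L (θ t x) (ω t x) with hG
  set H : Ω → EuclideanSpace ℝ (Fin d) :=
    fun x => gradTheta L (θ t x + ρ • g t x) (ω t x) with hH
  have hθm : Measurable[m] (θ t) := (hθmeas t).mono le_sup_left le_rfl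
  have hωm : Measurable[m] (ω t) := (hωmeas t).mono le_sup_left le_rfl
  have hgm : Measurable[m] (g t) :=
    (comap_measurable (g t)).mono le_sup_right le_rfl
  have hHm : Measurable[m] H :=
    hcont.measurable.comp ((hθm.add (hgm.const_smul ρ)).prodMk hωm)
  have hGm : Measurable[m] G := hcont.measurable.comp (hθm.prodMk hωm)
  have hHsm : StronglyMeasurable[m] H := hHm.stronglyMeasurable
  have hHM : Measurable[mΩ] H := hHm.mono hmle le_rfl
  have hGM : Measurable[mΩ] G := hGm.mono hmle le_rfl
  have hdiffb : ∀ x, ‖H x - G x‖ ≤ l * ρ * ‖g t x‖ := by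
    intro x
    have := (hLip (θ t x + ρ • g t x) (ω t x) (θ t x) (ω t x)).1
    simp only [add_sub_cancel_left, sub_self, norm_zero, norm_smul, Real.norm_eq_abs,
      abs_of_pos hρ] at this
    rw [show (ρ * ‖g t x‖) ^ 2 + (0 : ℝ) ^ 2 = (ρ * ‖g t x‖) ^ 2 by ring,
      Real.sqrt_sq (by positivity)] at this
    calc ‖H x - G x‖ ≤ _ := this
      _ = _ := by ring
  have gL : MemLp (g t) 2 P :=
    (memLp_two_iff_integrable_sq_norm (hgmeas t).aestronglyMeasurable).2 (hint_g2 t)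
  have g'L : MemLp (g' t) 2 P :=
    (memLp_two_iff_integrable_sq_norm (hg'meas t).aestronglyMeasurable).2 (hint_g'2 t)
  have GLp : MemLp G 2 P :=
    (memLp_two_iff_integrable_sq_norm hGM.aestronglyMeasurable).2 (hint_gradθ2 t)
  have DL : MemLp (fun x => H x - G x) 2 P :=
    gL.of_le_mul (hHM.sub hGM).aestronglyMeasurable (Filter.Eventually.of_forall hdiffb)
  have HL : MemLp H 2 P := by
    have := DL.add GLp
    have e : (fun x => H x - G x) + G = H := by ext1 x; simp
    rwa [e] at this
  have iH := HL.integrable_norm_pow (by norm_num : (2 : ℕ) ≠ 0)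
  have iA : Integrable (fun x => ‖g' t x - H x‖ ^ 2) P :=
    (g'L.sub HL).integrable_norm_pow (by norm_num : (2 : ℕ) ≠ 0)
  have iB : Integrable (fun x => ‖g t x - G x‖ ^ 2) P :=
    (gL.sub GLp).integrable_norm_pow (by norm_num : (2 : ℕ) ≠ 0)
  have iI : Integrable (fun x => (inner ℝ (H x) (g' t x) : ℝ)) P := by
    have hs : ∀ x, (inner ℝ (H x) (g' t x) : ℝ)
        = (‖H x‖ ^ 2 + ‖g' t x‖ ^ 2 - ‖g' t x - H x‖ ^ 2) / 2 := by
      intro x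
      rw [norm_sub_sq_real, real_inner_comm]
      ring
    simp_rw [hs]
    exact ((iH.add (hint_g'2 t)).sub iA).div_const 2
  have key : ∫ x, (inner ℝ (H x) (g' t x) : ℝ) ∂P = ∫ x, ‖H x‖ ^ 2 ∂P := by
    have h1 := condExp_bilin_of_stronglyMeasurable_left (μ := P) (m := m)
      (innerSL ℝ (E := EuclideanSpace ℝ (Fin d))) hHsm (g := g' t)
      iI (g'L.integrable (by norm_num))
    rw [← integral_condExp hmle]
    apply integral_congr_ae
    filter_upwards [h1, hg'_mean t] with x h1 h2
    have h3 : (P[fun x => (inner ℝ (H x) (g' t x) : ℝ)|m]) x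
      = (inner ℝ (H x) ((P[g' t|m]) x) : ℝ) := h1
    rw [h3, h2]
    exact real_inner_self_eq_norm_sq _
  have vA : ∫ x, ‖g' t x - H x‖ ^ 2 ∂P ≤ σ ^ 2 / M := by
    rw [← integral_condExp hmle]
    refine (integral_mono_ae integrable_condExp (integrable_const _) (hg'_var t)).trans ?_
    simp
  have vB : ∫ x, ‖g t x - G x‖ ^ 2 ∂P ≤ σ ^ 2 / M := by
    rw [← integral_condExp (hF t)]
    refine (integral_mono_ae integrable_condExp (integrable_const _) (hg_var t)).trans ?_
    simp
  have e1 : ∫ x, ‖g' t x‖ ^ 2 ∂P = ∫ x, ‖g' t x - H x‖ ^ 2 ∂P + ∫ x, ‖H x‖ ^ 2 ∂P := by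
    have : ∀ x, ‖g' t x‖ ^ 2
        = ‖g' t x - H x‖ ^ 2 + 2 * (inner ℝ (H x) (g' t x) : ℝ) - ‖H x‖ ^ 2 := by
      intro x
      rw [norm_sub_sq_real, real_inner_comm]
      ring
    simp_rw [this]
    have iS : Integrable (fun x => ‖g' t x - H x‖ ^ 2 + 2 * (inner ℝ (H x) (g' t x) : ℝ)) P :=
      iA.add (iI.const_mul 2)
    rw [integral_sub iS iH, integral_add iA (iI.const_mul 2),
      integral_const_mul, key]
    ring
  have pw : ∀ x, ‖H x‖ ^ 2
      ≤ (2 + 4 * (l * ρ) ^ 2) * ‖G x‖ ^ 2 + 4 * (l * ρ) ^ 2 * ‖g t x - G x‖ ^ 2 := by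
    intro x
    have a1 : ‖H x‖ ≤ ‖H x - G x‖ + ‖G x‖ := by
      simpa using norm_add_le (H x - G x) (G x)
    have a2 : ‖g t x‖ ≤ ‖g t x - G x‖ + ‖G x‖ := by
      simpa using norm_add_le (g t x - G x) (G x)
    have a3 : ‖H x‖ ≤ l * ρ * ‖g t x‖ + ‖G x‖ := a1.trans (by linarith [hdiffb x])
    have b1 : ‖H x‖ ^ 2 ≤ (l * ρ * ‖g t x‖ + ‖G x‖) ^ 2 := by gcongr
    have b2 : ‖g t x‖ ^ 2 ≤ (‖g t x - G x‖ + ‖G x‖) ^ 2 := by gcongr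
    have b3 : ‖g t x‖ ^ 2 ≤ 2 * ‖g t x - G x‖ ^ 2 + 2 * ‖G x‖ ^ 2 := by
      nlinarith [sq_nonneg (‖g t x - G x‖ - ‖G x‖)]
    have b4 := mul_le_mul_of_nonneg_left b3 (sq_nonneg (l * ρ))
    nlinarith [sq_nonneg (l * ρ * ‖g t x‖ - ‖G x‖)]
  have iG : Integrable (fun x => ‖G x‖ ^ 2) P := hint_gradθ2 t
  have e2 : ∫ x, ‖H x‖ ^ 2 ∂P ≤ (2 + 4 * (l * ρ) ^ 2) * ∫ x, ‖G x‖ ^ 2 ∂P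
      + 4 * (l * ρ) ^ 2 * ∫ x, ‖g t x - G x‖ ^ 2 ∂P := by
    rw [← integral_const_mul, ← integral_const_mul,
      ← integral_add (iG.const_mul _) (iB.const_mul _)]
    exact integral_mono iH ((iG.const_mul _).add (iB.const_mul _)) pw
  have pG : 0 ≤ ∫ x, ‖G x‖ ^ 2 ∂P := integral_nonneg fun x => by positivity
  have ps : 0 ≤ σ ^ 2 / (M : ℝ) := by positivity
  have e3 := mul_le_mul_of_nonneg_left vB (by positivity : 0 ≤ 4 * (l * ρ) ^ 2)
  have e4 : 0 ≤ ρ * l * ∫ x, ‖G x‖ ^ 2 ∂P := by positivity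
  have e5 : 0 ≤ (l * ρ) ^ 2 * (σ ^ 2 / (M : ℝ)) := by positivity
  rw [e1, mul_div_assoc]
  linarith
end

section
/- Lower bound for the θ-update (step in the SharpDRO proof): With θ_{t+1} := θ_t − η_θ g'_t, E[L(θ_{t+1}, ω_t)] ≥ E[L(θ_t, ω_t)] − (3η_θ/2 + l²ρ²η_θ/2 + l η_θ² (2ρ²l² + ρl + 1)) E‖∇_θ L(θ_t, ω_t)‖² − (l²ρ²η_θ/2 + (l η_θ²/2)(5ρ²l² + 2)) σ²/M. -/
open MeasureTheory

open ProbabilityTheory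

/-- Quadratic lower bound for a function with Lipschitz gradient. -/
lemma descent_lower {E : Type*} [NormedAddCommGroup E] [InnerProductSpace ℝ E] [CompleteSpace E]
    (f : E → ℝ) (hf : Differentiable ℝ f) (l : ℝ)
    (hL : ∀ x y, ‖gradient f x - gradient f y‖ ≤ l * ‖x - y‖) (x v : E) :
    f x + inner ℝ (gradient f x) v - l / 2 * ‖v‖ ^ 2 ≤ f (x + v) := by
  have hd : ∀ t : ℝ, HasDerivAt
      (fun t : ℝ => f (x + t • v) - t * inner ℝ (gradient f x) v + l / 2 * t ^ 2 * ‖v‖ ^ 2)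
      (inner ℝ (gradient f (x + t • v)) v - inner ℝ (gradient f x) v + l * t * ‖v‖ ^ 2) t := by
    intro t
    have h1 : HasDerivAt (fun t : ℝ => x + t • v) v t := by
      simpa using ((hasDerivAt_id t).smul_const v).const_add x
    have h2 := (hf (x + t • v)).hasGradientAt.hasFDerivAt.comp_hasDerivAt t h1
    have h3 : HasDerivAt (fun t : ℝ => t * inner ℝ (gradient f x) v)
        (inner ℝ (gradient f x) v) t := by
      simpa using (hasDerivAt_id t).mul_const (inner ℝ (gradient f x) v)
    have h4 : HasDerivAt (fun t : ℝ => l / 2 * t ^ 2 * ‖v‖ ^ 2) (l * t * ‖v‖ ^ 2) t := by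
      have := (((hasDerivAt_id t).pow 2).const_mul (l / 2)).mul_const (‖v‖ ^ 2)
      refine this.congr_deriv ?_
      simp only [id_eq]; push_cast; ring
    have h5 := (h2.sub h3).add h4
    refine h5.congr_deriv ?_
    simp
  have hmono : MonotoneOn
      (fun t : ℝ => f (x + t • v) - t * inner ℝ (gradient f x) v + l / 2 * t ^ 2 * ‖v‖ ^ 2)
      (Set.Icc 0 1) := by
    refine monotoneOn_of_hasDerivWithinAt_nonneg (convex_Icc 0 1)
      (fun t _ => (hd t).continuousAt.continuousWithinAt)
      (fun t _ => (hd t).hasDerivWithinAt) ?_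
    intro t ht
    rw [interior_Icc] at ht
    have h1 := abs_real_inner_le_norm (gradient f (x + t • v) - gradient f x) v
    have h2 := hL (x + t • v) x
    rw [add_sub_cancel_left, norm_smul, Real.norm_of_nonneg ht.1.le] at h2
    rw [← inner_sub_left]
    have h3 := neg_abs_le (inner ℝ (gradient f (x + t • v) - gradient f x) v)
    have h4 := mul_le_mul_of_nonneg_right h2 (norm_nonneg v)
    nlinarith
  have := hmono (by simp) (by simp) (zero_le_one (α := ℝ))
  simp only [zero_smul, add_zero, one_smul, zero_mul, one_mul, one_pow, mul_one, sub_zero,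
    ne_eq, OfNat.ofNat_ne_zero, not_false_eq_true, zero_pow, mul_zero] at this
  linarith

lemma integrable_inner_of_memLp {E Ω : Type*} [NormedAddCommGroup E] [InnerProductSpace ℝ E]
    {mΩ : MeasurableSpace Ω} {P : Measure Ω} {X Y : Ω → E} (hX : MemLp X 2 P) (hY : MemLp Y 2 P) :
    Integrable (fun x => inner ℝ (X x) (Y x)) P := by
  have h1 := hX.integrable_norm_pow (p := 2) (by norm_num)
  have h2 := hY.integrable_norm_pow (p := 2) (by norm_num)
  refine (h1.add h2).mono' (hX.1.inner hY.1) (Filter.Eventually.of_forall fun x => ?_)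
  have := norm_inner_le_norm (𝕜 := ℝ) (X x) (Y x)
  simp only [Pi.add_apply]
  nlinarith [sq_nonneg (‖X x‖ - ‖Y x‖), sq_nonneg ‖X x‖, sq_nonneg ‖Y x‖]

lemma integral_inner_condExp {E Ω : Type*} [NormedAddCommGroup E] [InnerProductSpace ℝ E]
    [CompleteSpace E]
    {m mΩ : MeasurableSpace Ω} {P : Measure Ω} [IsProbabilityMeasure P] (hm : m ≤ mΩ)
    {X Z G : Ω → E} (hX : MemLp X 2 P) (hZ : MemLp Z 2 P) (hZm : AEStronglyMeasurable[m] Z P)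
    (hG : P[X|m] =ᵐ[P] G) :
    ∫ x, inner ℝ (Z x) (X x) ∂P = ∫ x, inner ℝ (Z x) (G x) ∂P := by
  have h := condExp_bilin_of_aestronglyMeasurable_left (innerSL ℝ (E := E)) hZm
    (integrable_inner_of_memLp hZ hX) (hX.integrable (by norm_num))
  rw [← integral_condExp hm]
  refine integral_congr_ae ?_
  filter_upwards [h, hG] with x h1 h2
  rw [← h2]
  exact h1

lemma second_moment {E Ω : Type*} [NormedAddCommGroup E] [InnerProductSpace ℝ E]
    [CompleteSpace E]
    {m mΩ : MeasurableSpace Ω} {P : Measure Ω} [IsProbabilityMeasure P] (hm : m ≤ mΩ)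
    {X G : Ω → E} (hX : MemLp X 2 P) (hG : P[X|m] =ᵐ[P] G) (s : ℝ)
    (hv : ∀ᵐ x ∂P, (P[(fun y => ‖X y - G y‖ ^ 2)|m]) x ≤ s) :
    MemLp G 2 P ∧ AEStronglyMeasurable[m] G P ∧
      ∫ x, ‖X x‖ ^ 2 ∂P ≤ ∫ x, ‖G x‖ ^ 2 ∂P + s := by
  have hG2 : MemLp G 2 P := (hX.condExp (m := m) (by norm_num)).ae_eq hG
  have hGm : AEStronglyMeasurable[m] G P :=
    stronglyMeasurable_condExp.aestronglyMeasurable.congr hG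
  refine ⟨hG2, hGm, ?_⟩
  have h1 := integral_inner_condExp hm hX hG2 hGm hG
  have h2 : ∫ x, ‖X x - G x‖ ^ 2 ∂P ≤ s := by
    rw [← integral_condExp hm]
    calc _ ≤ ∫ x, s ∂P := integral_mono_ae integrable_condExp (integrable_const s) hv
      _ = s := by simp
  have i1 : Integrable (fun x => ‖X x - G x‖ ^ 2) P :=
    (hX.sub hG2).integrable_norm_pow (p := 2) (by norm_num)
  have i2 : Integrable (fun x => ‖G x‖ ^ 2) P := hG2.integrable_norm_pow (p := 2) (by norm_num)
  have i3 := integrable_inner_of_memLp hG2 hX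
  have e : ∫ x, ‖X x‖ ^ 2 ∂P
      = ∫ x, (‖X x - G x‖ ^ 2 + 2 * inner ℝ (G x) (X x)) - ‖G x‖ ^ 2 ∂P := by
    congr 1; ext x
    rw [norm_sub_sq_real, real_inner_comm]; ring
  have i4 : Integrable (fun x => ‖X x - G x‖ ^ 2 + 2 * inner ℝ (G x) (X x)) P :=
    i1.add (i3.const_mul 2)
  rw [e, integral_sub i4 i2, integral_add i1 (i3.const_mul 2),
    integral_const_mul, h1]
  simp only [real_inner_self_eq_norm_sq]
  linarith

theorem sharpDRO_theta_update_lower_bound {d n : ℕ} {Ω : Type} [mΩ : MeasurableSpace Ω]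
    (P : Measure Ω) [IsProbabilityMeasure P]
    (L : EuclideanSpace ℝ (Fin d) → EuclideanSpace ℝ (Fin n) → ℝ)
    (l μpl σ ρ : ℝ) (M : ℕ)
    (hl : 0 < l) (hμpl : 0 < μpl) (hσ : 0 < σ) (hρ : 0 < ρ) (hM : 1 ≤ M)
    (hdiff : Differentiable ℝ (Function.uncurry L))
    (hLip : ∀ θ₁ ω₁ θ₂ ω₂,
      ‖gradTheta L θ₁ ω₁ - gradTheta L θ₂ ω₂‖ ≤ l * Real.sqrt (‖θ₁ - θ₂‖ ^ 2 + ‖ω₁ - ω₂‖ ^ 2) ∧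
      ‖gradOmega L θ₁ ω₁ - gradOmega L θ₂ ω₂‖ ≤ l * Real.sqrt (‖θ₁ - θ₂‖ ^ 2 + ‖ω₁ - ω₂‖ ^ 2))
    (Lstar : EuclideanSpace ℝ (Fin d) → ℝ)
    (hLstar : ∀ θ', IsGreatest (Set.range (L θ')) (Lstar θ'))
    (hPL : ∀ θ' ω', 2 * μpl * (Lstar θ' - L θ' ω') ≤ ‖gradOmega L θ' ω'‖ ^ 2)
    (F : ℕ → MeasurableSpace Ω) (hF : ∀ t, F t ≤ mΩ)
    (θ : ℕ → Ω → EuclideanSpace ℝ (Fin d)) (ω : ℕ → Ω → EuclideanSpace ℝ (Fin n))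
    (g g' : ℕ → Ω → EuclideanSpace ℝ (Fin d))
    (hθmeas : ∀ t, Measurable[F t] (θ t)) (hωmeas : ∀ t, Measurable[F t] (ω t))
    (hgmeas : ∀ t, Measurable (g t)) (hg'meas : ∀ t, Measurable (g' t))
    (hg_mean : ∀ t, P[g t|F t] =ᵐ[P] fun x => gradTheta L (θ t x) (ω t x))
    (hg_var : ∀ t, ∀ᵐ x ∂P,
      (P[(fun y => ‖g t y - gradTheta L (θ t y) (ω t y)‖ ^ 2)|F t]) x ≤ σ ^ 2 / (M : ℝ))
    (hg'_mean : ∀ t, P[g' t|F t ⊔ MeasurableSpace.comap (g t) inferInstance] =ᵐ[P]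
      fun x => gradTheta L (θ t x + ρ • g t x) (ω t x))
    (hg'_var : ∀ t, ∀ᵐ x ∂P,
      (P[(fun y => ‖g' t y - gradTheta L (θ t y + ρ • g t y) (ω t y)‖ ^ 2)|
        F t ⊔ MeasurableSpace.comap (g t) inferInstance]) x ≤ σ ^ 2 / (M : ℝ))
    (hint_g2 : ∀ t, Integrable (fun x => ‖g t x‖ ^ 2) P)
    (hint_g'2 : ∀ t, Integrable (fun x => ‖g' t x‖ ^ 2) P)
    (hint_gradθ2 : ∀ t, Integrable (fun x => ‖gradTheta L (θ t x) (ω t x)‖ ^ 2) P)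
    (hint_inner : ∀ t,
      Integrable (fun x => (inner ℝ (g' t x) (gradTheta L (θ t x) (ω t x)) : ℝ)) P)
    (ηθ : ℝ) (hηθ : 0 < ηθ)
    (hθupd : ∀ t x, θ (t + 1) x = θ t x - ηθ • g' t x)
    (hint_L : ∀ s t, Integrable (fun x => L (θ s x) (ω t x)) P) :
    ∀ t, ∫ x, L (θ (t + 1) x) (ω t x) ∂P
      ≥ ∫ x, L (θ t x) (ω t x) ∂P
        - (3 * ηθ / 2 + l ^ 2 * ρ ^ 2 * ηθ / 2 + l * ηθ ^ 2 * (2 * ρ ^ 2 * l ^ 2 + ρ * l + 1))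
            * ∫ x, ‖gradTheta L (θ t x) (ω t x)‖ ^ 2 ∂P
        - (l ^ 2 * ρ ^ 2 * ηθ / 2 + l * ηθ ^ 2 / 2 * (5 * ρ ^ 2 * l ^ 2 + 2)) * σ ^ 2 / M := by
  intro t
  set G : Ω → EuclideanSpace ℝ (Fin d) := fun x => gradTheta L (θ t x) (ω t x) with hGdef
  set H : Ω → EuclideanSpace ℝ (Fin d) :=
    fun x => gradTheta L (θ t x + ρ • g t x) (ω t x) with hHdef
  set m' : MeasurableSpace Ω := F t ⊔ MeasurableSpace.comap (g t) inferInstance with hm'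
  have hm'le : m' ≤ mΩ := sup_le (hF t) (hgmeas t).comap_le
  have hg2 : MemLp (g t) 2 P :=
    (memLp_two_iff_integrable_sq_norm (hgmeas t).aestronglyMeasurable).2 (hint_g2 t)
  have hg'2 : MemLp (g' t) 2 P :=
    (memLp_two_iff_integrable_sq_norm (hg'meas t).aestronglyMeasurable).2 (hint_g'2 t)
  obtain ⟨hG2, hGm, hgm⟩ := second_moment (hF t) hg2 (hg_mean t) _ (hg_var t)
  obtain ⟨hH2, hHm, hg'm⟩ := second_moment hm'le hg'2 (hg'_mean t) _ (hg'_var t)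
  change MemLp G 2 P at hG2
  change MemLp H 2 P at hH2
  change ∫ x, ‖g t x‖ ^ 2 ∂P ≤ ∫ x, ‖G x‖ ^ 2 ∂P + σ ^ 2 / M at hgm
  change ∫ x, ‖g' t x‖ ^ 2 ∂P ≤ ∫ x, ‖H x‖ ^ 2 ∂P + σ ^ 2 / M at hg'm
  have hGm' : AEStronglyMeasurable[m'] G P := hGm.mono le_sup_left
  have hinner : ∫ x, inner ℝ (G x) (g' t x) ∂P = ∫ x, inner ℝ (G x) (H x) ∂P :=
    integral_inner_condExp hm'le hg'2 hG2 hGm' (hg'_mean t)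
  have iG : Integrable (fun x => ‖G x‖ ^ 2) P := hG2.integrable_norm_pow (p := 2) (by norm_num)
  have iH : Integrable (fun x => ‖H x‖ ^ 2) P := hH2.integrable_norm_pow (p := 2) (by norm_num)
  have hHG : ∀ x, ‖H x - G x‖ ≤ l * ρ * ‖g t x‖ := by
    intro x
    have := (hLip (θ t x + ρ • g t x) (ω t x) (θ t x) (ω t x)).1
    simp only [add_sub_cancel_left, sub_self, norm_zero, ne_eq, OfNat.ofNat_ne_zero,
      not_false_eq_true, zero_pow, add_zero, norm_smul,
      Real.norm_of_nonneg hρ.le] at this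
    rw [Real.sqrt_sq (by positivity)] at this
    rw [mul_assoc]; exact this
  have hHGsq : ∀ x, ‖H x - G x‖ ^ 2 ≤ l ^ 2 * ρ ^ 2 * ‖g t x‖ ^ 2 := by
    intro x
    have := pow_le_pow_left₀ (norm_nonneg _) (hHG x) 2
    nlinarith
  -- bound on the inner product
  have b1 : ∫ x, inner ℝ (G x) (H x) ∂P
      ≤ 3 / 2 * ∫ x, ‖G x‖ ^ 2 ∂P + l ^ 2 * ρ ^ 2 / 2 * ∫ x, ‖g t x‖ ^ 2 ∂P := by
    rw [← integral_const_mul, ← integral_const_mul,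
      ← integral_add (iG.const_mul _) ((hint_g2 t).const_mul _)]
    refine integral_mono (integrable_inner_of_memLp hG2 hH2)
      ((iG.const_mul _).add ((hint_g2 t).const_mul _)) fun x => ?_
    have h1 := hHGsq x
    have h2 := real_inner_le_norm (G x) (H x - G x)
    rw [inner_sub_right, real_inner_self_eq_norm_sq] at h2
    simp only
    nlinarith [sq_nonneg (‖G x‖ - ‖H x - G x‖)]
  have b2 : ∫ x, ‖H x‖ ^ 2 ∂P
      ≤ 2 * ∫ x, ‖G x‖ ^ 2 ∂P + 2 * (l ^ 2 * ρ ^ 2) * ∫ x, ‖g t x‖ ^ 2 ∂P := by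
    rw [← integral_const_mul, ← integral_const_mul,
      ← integral_add (iG.const_mul _) ((hint_g2 t).const_mul _)]
    refine integral_mono iH
      ((iG.const_mul _).add ((hint_g2 t).const_mul _)) fun x => ?_
    have h1 := hHGsq x
    have h2 : ‖H x‖ ≤ ‖G x‖ + ‖H x - G x‖ := by
      simpa using norm_add_le (G x) (H x - G x)
    have h3 := pow_le_pow_left₀ (norm_nonneg _) h2 2
    simp only
    nlinarith [sq_nonneg (‖G x‖ - ‖H x - G x‖)]
  -- descent
  have iI := integrable_inner_of_memLp hG2 hg'2
  have iJ : Integrable (fun x => L (θ t x) (ω t x) - ηθ * inner ℝ (G x) (g' t x)) P :=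
    (hint_L t t).sub (iI.const_mul _)
  have b0 : ∫ x, L (θ t x) (ω t x) ∂P - ηθ * ∫ x, inner ℝ (G x) (g' t x) ∂P
      - l * ηθ ^ 2 / 2 * ∫ x, ‖g' t x‖ ^ 2 ∂P ≤ ∫ x, L (θ (t + 1) x) (ω t x) ∂P := by
    rw [← integral_const_mul, ← integral_const_mul,
      ← integral_sub (hint_L t t) (iI.const_mul _),
      ← integral_sub iJ ((hint_g'2 t).const_mul _)]
    refine integral_mono (iJ.sub ((hint_g'2 t).const_mul _))
      (hint_L (t + 1) t) fun x => ?_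
    have hd : Differentiable ℝ (fun θ' => L θ' (ω t x)) :=
      hdiff.comp (differentiable_id.prodMk (differentiable_const (ω t x)))
    have := descent_lower (fun θ' => L θ' (ω t x)) hd l (fun a b => by
      have := (hLip a (ω t x) b (ω t x)).1
      simpa [gradTheta, Real.sqrt_sq (norm_nonneg _)] using this) (θ t x) (-(ηθ • g' t x))
    simp only [hθupd, sub_eq_add_neg (θ t x)]
    rw [inner_neg_right, inner_smul_right, norm_neg, norm_smul, Real.norm_of_nonneg hηθ.le] at this
    have hGx : gradient (fun θ' => L θ' (ω t x)) (θ t x) = G x := rfl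
    rw [hGx] at this
    refine le_trans (le_of_eq ?_) this
    ring
  have nG : 0 ≤ ∫ x, ‖G x‖ ^ 2 ∂P := integral_nonneg fun x => by positivity
  have hMpos : (0 : ℝ) < M := by exact_mod_cast hM
  have nS : 0 ≤ σ ^ 2 / (M : ℝ) := by positivity
  rw [hinner] at b0
  rw [mul_div_assoc _ (σ ^ 2) (M : ℝ)]
  change _ ≥ _ - _ * ∫ x, ‖G x‖ ^ 2 ∂P - _
  generalize σ ^ 2 / (M : ℝ) = s at *
  generalize ∫ x, ‖G x‖ ^ 2 ∂P = A at *
  generalize ∫ x, ‖H x‖ ^ 2 ∂P = B at *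
  generalize ∫ x, ‖g t x‖ ^ 2 ∂P = C at *
  generalize ∫ x, ‖g' t x‖ ^ 2 ∂P = D at *
  generalize ∫ x, inner ℝ (G x) (H x) ∂P = I at *
  have c1 : I ≤ 3 / 2 * A + l ^ 2 * ρ ^ 2 / 2 * (A + s) :=
    b1.trans (by gcongr)
  have c2 : D ≤ 2 * A + 2 * (l ^ 2 * ρ ^ 2) * (A + s) + s := by
    have : 2 * (l ^ 2 * ρ ^ 2) * C ≤ 2 * (l ^ 2 * ρ ^ 2) * (A + s) := by gcongr
    linarith
  have c3 : ηθ * I ≤ ηθ * (3 / 2 * A + l ^ 2 * ρ ^ 2 / 2 * (A + s)) := by gcongr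
  have c4 : l * ηθ ^ 2 / 2 * D
      ≤ l * ηθ ^ 2 / 2 * (2 * A + 2 * (l ^ 2 * ρ ^ 2) * (A + s) + s) := by gcongr
  have p1 : 0 ≤ l * ηθ ^ 2 * (ρ ^ 2 * l ^ 2 + ρ * l) * A := by positivity
  have p2 : 0 ≤ l * ηθ ^ 2 / 2 * (3 * ρ ^ 2 * l ^ 2 + 1) * s := by positivity
  nlinarith
end
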